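/- For general points, if 4d ≥ 18n + 3 and n ≥ 1, then ℓ(L(d, d−3, 6^n)) ≥ 4d − 18n − 3, with equality whenever n is odd or 2d ≠ 9n + 2. Since v(L(d, d−3, 6^n)) = 4d − 21n − 3, this system is special. -/

import Mathlib

open MvPolynomial

/-- The iterated partial derivative corresponding to the multi-index `ν`. -/
noncomputable def mderiv (ν : Fin 3 → ℕ) :
    MvPolynomial (Fin 3) ℂ →ₗ[ℂ] MvPolynomial (Fin 3) ℂ :=
  ((pderiv (R := ℂ) (0 : Fin 3)).toLinearMap ^ ν 0) ∘ₗ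
  ((pderiv (R := ℂ) (1 : Fin 3)).toLinearMap ^ ν 1) ∘ₗ
  ((pderiv (R := ℂ) (2 : Fin 3)).toLinearMap ^ ν 2)

/-- The linear system `L(d; m)` of homogeneous forms of degree `d` in three variables
all of whose partial derivatives of order `< m i` vanish at the point `p i`,
i.e. plane curves of degree `d` with multiplicity at least `m i` at `p i`. -/
noncomputable def linSys {k : ℕ} (p : Fin k → Fin 3 → ℂ) (d : ℕ) (m : Fin k → ℕ) :
    Submodule ℂ (MvPolynomial (Fin 3) ℂ) :=
  (homogeneousSubmodule (Fin 3) ℂ d) ⊓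
    ⨅ (i : Fin k), ⨅ (ν : Fin 3 → ℕ), ⨅ (_ : ν 0 + ν 1 + ν 2 < m i),
      LinearMap.ker ((aeval (p i)).toLinearMap ∘ₗ mderiv ν)

/-- The projective dimension `ℓ` of the linear system (`-1` means empty). -/
noncomputable def projDim {k : ℕ} (p : Fin k → Fin 3 → ℂ) (d : ℕ) (m : Fin k → ℕ) : ℤ :=
  (Module.finrank ℂ (linSys p d m) : ℤ) - 1

/-- The virtual dimension `v = d(d+3)/2 - ∑ mᵢ(mᵢ+1)/2`. -/
def virtDim {k : ℕ} (d : ℕ) (m : Fin k → ℕ) : ℤ :=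
  ((d : ℤ) * (d + 3)) / 2 - ∑ i : Fin k, ((m i : ℤ) * (m i + 1)) / 2

/-- The quasi-homogeneous multiplicity vector `(m₀, 6, …, 6)` on `n + 1` points. -/
def qh (n m0 : ℕ) : Fin (n + 1) → ℕ := fun i => if i = 0 then m0 else 6

/-- A property `Q` of configurations of `k` points of `ℙ²` (given by nonzero homogeneous
coordinate vectors) holds for points in general position: there is a nonzero polynomial
in the coordinates such that `Q` holds whenever it does not vanish. -/
def Generically (k : ℕ) (Q : (Fin k → Fin 3 → ℂ) → Prop) : Prop :=
  ∃ P : MvPolynomial (Fin k × Fin 3) ℂ, P ≠ 0 ∧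
    ∀ p : Fin k → Fin 3 → ℂ, (∀ i, p i ≠ 0) →
      eval (fun x => p x.1 x.2) P ≠ 0 → Q p

/-!
Lower bound: the product of the `n` lines joining `p₀` to the other points, cubed, lies in
`L(3n, 3n, 3ⁿ)`, so multiplying by it embeds `L(d - 3n, d - 3 - 3n, 3ⁿ)` into `L(d, d - 3, 6ⁿ)`.
The expected dimension of the smaller system is already `4d - 18n - 3`.

Upper bound: the rank of the matrix of vanishing conditions can only drop under specialization, so
one configuration attaining the bound is enough. Take `p₀ = (0 : 0 : 1)` and `pᵢ = (a : 1 : a ^ m)`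
for the `n`-th roots of unity `a`, where `n = m + r` and `m = r` or `m = r + 1`. The map
`(t, s) ↦ (t (s + t ^ r) : s + t ^ r : 1 + t ^ m s)` contracts `s = - t ^ r` to `p₀` and each ruling
`t = a` to the corresponding `pᵢ`, so a form of the system pulls back to
`(s + t ^ r) ^ (d - 3) * ∏ (t - a) ^ 6 * c`. Degree bounds confine the exponents of `c` to a
trapezoid with `s`-degree at most `3`, and counting its lattice points gives the bound.
-/

namespace Generically

variable {k : ℕ} {Q Q' : (Fin k → Fin 3 → ℂ) → Prop}

theorem mono (hQ : Generically k Q) (h : ∀ p, Q p → Q' p) : Generically k Q' :=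
  let ⟨P, hP, hPQ⟩ := hQ
  ⟨P, hP, fun p hp0 hp => h p (hPQ p hp0 hp)⟩

theorem const_imp {c : Prop} (h : c → Generically k Q) : Generically k fun p => c → Q p := by
  by_cases hc : c
  · exact (h hc).mono fun p hp _ => hp
  · exact ⟨1, one_ne_zero, fun p _ _ hc' => absurd hc' hc⟩

end Generically

/-! ### Order of vanishing -/

/-- The polynomial `F` vanishes to order `m` at the point `p`: all its iterated partial derivatives
of order `< m` vanish at `p`. The recursion on `m` avoids multi-indices. -/
def VanishesToOrder {σ R : Type*} [CommSemiring R] (p : σ → R) : ℕ → MvPolynomial σ R → Prop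
  | 0, _ => True
  | m + 1, F => eval p F = 0 ∧ ∀ i, VanishesToOrder p m (pderiv i F)

namespace VanishesToOrder

section CommSemiring

variable {σ R : Type*} [CommSemiring R] {p : σ → R} {m k : ℕ} {F G : MvPolynomial σ R}

theorem pderiv (hF : VanishesToOrder p m F) (i : σ) :
    VanishesToOrder p (m - 1) (MvPolynomial.pderiv i F) := by
  cases m with
  | zero => trivial
  | succ m => exact hF.2 i

theorem eval_eq_zero (hF : VanishesToOrder p m F) (hm : m ≠ 0) : eval p F = 0 := by
  obtain ⟨m, rfl⟩ := Nat.exists_eq_succ_of_ne_zero hm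
  exact hF.1

theorem one_iff : VanishesToOrder p 1 F ↔ eval p F = 0 :=
  and_iff_left fun _ => trivial

theorem add (hF : VanishesToOrder p m F) (hG : VanishesToOrder p m G) :
    VanishesToOrder p m (F + G) := by
  induction m generalizing F G with
  | zero => trivial
  | succ m ih =>
    refine ⟨by rw [map_add, hF.1, hG.1, add_zero], fun i => ?_⟩
    rw [map_add]
    exact ih (hF.2 i) (hG.2 i)

theorem mul (hF : VanishesToOrder p m F) (hG : VanishesToOrder p k G) :
    VanishesToOrder p (m + k) (F * G) := by
  suffices h : ∀ r ≤ m + k, VanishesToOrder p r (F * G) from h _ le_rfl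
  intro r
  induction r generalizing m k F G with
  | zero => exact fun _ => trivial
  | succ r ih =>
    intro hr
    refine ⟨?_, fun i => ?_⟩
    · rw [map_mul]
      rcases Nat.eq_zero_or_pos m with hm | hm
      · rw [hG.eval_eq_zero (by lia), mul_zero]
      · rw [hF.eval_eq_zero hm.ne', zero_mul]
    · rw [pderiv_mul]
      exact (ih (hF.pderiv i) hG (by lia)).add (ih hF (hG.pderiv i) (by lia))

theorem pow (hF : VanishesToOrder p m F) (k : ℕ) : VanishesToOrder p (k * m) (F ^ k) := by
  induction k with
  | zero => rw [zero_mul]; trivial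
  | succ k ih =>
    rw [pow_succ, Nat.succ_mul]
    exact ih.mul hF

theorem prod {ι : Type*} [Fintype ι] {m : ι → ℕ} {F : ι → MvPolynomial σ R}
    (h : ∀ i, VanishesToOrder p (m i) (F i)) :
    VanishesToOrder p (∑ i, m i) (∏ i, F i) := by
  classical
  induction (Finset.univ : Finset ι) using Finset.induction_on with
  | empty => trivial
  | insert i s hi ih =>
    rw [Finset.prod_insert hi, Finset.sum_insert hi]
    exact (h i).mul ih

end CommSemiring

theorem succ_of_isHomogeneous {σ R : Type*} [Finite σ] [CommRing R] [IsDomain R] [CharZero R]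
    {p : σ → R} {F : MvPolynomial σ R} {m d : ℕ} (hF : F.IsHomogeneous d) (hd : d ≠ 0)
    (hm : m ≠ 0) (h : ∀ i, VanishesToOrder p m (MvPolynomial.pderiv i F)) :
    VanishesToOrder p (m + 1) F := by
  cases nonempty_fintype σ
  have euler := congrArg (eval p) hF.sum_X_mul_pderiv
  simp only [map_sum, map_mul, (h _).eval_eq_zero hm, mul_zero, Finset.sum_const_zero, map_nsmul]
    at euler
  exact ⟨(smul_eq_zero.1 euler.symm).resolve_left hd, h⟩

end VanishesToOrder

theorem commute_pderiv {σ R : Type*} [CommRing R] (i j : σ) :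
    Commute ((pderiv i).toLinearMap : Module.End R (MvPolynomial σ R)) (pderiv j).toLinearMap := by
  classical
  have h : ⁅(pderiv i : Derivation R (MvPolynomial σ R) _), pderiv j⁆ = 0 :=
    derivation_ext fun k => by
      rw [Derivation.commutator_apply, pderiv_X, pderiv_X]
      simp [Pi.single_apply, apply_ite]
  exact LinearMap.ext fun F => sub_eq_zero.1 (congrArg (fun D => D F) h)

theorem mderiv_zero (F : MvPolynomial (Fin 3) ℂ) : mderiv 0 F = F := rfl

theorem mderiv_pderiv (ν : Fin 3 → ℕ) (i : Fin 3) (F : MvPolynomial (Fin 3) ℂ) :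
    mderiv ν (pderiv i F) = mderiv (ν + Pi.single i 1) F := by
  let D (j : Fin 3) : Module.End ℂ (MvPolynomial (Fin 3) ℂ) := (pderiv j).toLinearMap
  have hc (j a i) : D j ^ a * D i = D i * D j ^ a := (commute_pderiv j i).pow_left a
  have hc' (j a i T) : D j ^ a * (D i * T) = D i * (D j ^ a * T) := by
    rw [← mul_assoc, hc, mul_assoc]
  suffices h : D 0 ^ ν 0 * (D 1 ^ ν 1 * (D 2 ^ ν 2 * D i)) =
      D 0 ^ (ν + Pi.single i 1 : Fin 3 → ℕ) 0 * (D 1 ^ (ν + Pi.single i 1 : Fin 3 → ℕ) 1 *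
        D 2 ^ (ν + Pi.single i 1 : Fin 3 → ℕ) 2) from congrArg (fun T => T F) h
  fin_cases i <;> simp [pow_succ', mul_assoc, hc, hc']

theorem sum_add_single (ν : Fin 3 → ℕ) (i : Fin 3) :
    (ν + Pi.single i 1 : Fin 3 → ℕ) 0 + (ν + Pi.single i 1 : Fin 3 → ℕ) 1 +
      (ν + Pi.single i 1 : Fin 3 → ℕ) 2 = ν 0 + ν 1 + ν 2 + 1 := by
  simpa only [Fin.sum_univ_three] using
    show ∑ j, (ν + Pi.single i 1 : Fin 3 → ℕ) j = ∑ j, ν j + 1 by simp [Finset.sum_add_distrib]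

theorem exists_eq_add_single {ι : Type*} [DecidableEq ι] {ν : ι → ℕ} (h : ν ≠ 0) :
    ∃ (ν' : ι → ℕ) (i : ι), ν = ν' + Pi.single i 1 := by
  obtain ⟨i, hi⟩ := Function.ne_iff.1 h
  refine ⟨ν - Pi.single i 1, i, (tsub_add_cancel_of_le fun j => ?_).symm⟩
  rcases eq_or_ne j i with rfl | hj
  · simpa using Nat.one_le_iff_ne_zero.2 hi
  · simp [hj]

theorem vanishesToOrder_iff {p : Fin 3 → ℂ} {m : ℕ} {F : MvPolynomial (Fin 3) ℂ} :
    VanishesToOrder p m F ↔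
      ∀ ν : Fin 3 → ℕ, ν 0 + ν 1 + ν 2 < m → eval p (mderiv ν F) = 0 := by
  induction m generalizing F with
  | zero => simp [VanishesToOrder]
  | succ m ih =>
    simp only [VanishesToOrder, ih, mderiv_pderiv]
    constructor
    · rintro ⟨h0, h⟩ ν hν
      by_cases hz : ν = 0
      · rwa [hz, mderiv_zero]
      · obtain ⟨ν', i, rfl⟩ := exists_eq_add_single hz
        rw [sum_add_single] at hν
        exact h i ν' (by lia)
    · refine fun h => ⟨h 0 (by simp), fun i ν hν => h _ ?_⟩
      rw [sum_add_single]
      lia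

theorem mem_linSys {k : ℕ} {p : Fin k → Fin 3 → ℂ} {d : ℕ} {m : Fin k → ℕ}
    {F : MvPolynomial (Fin 3) ℂ} :
    F ∈ linSys p d m ↔ F.IsHomogeneous d ∧ ∀ i, VanishesToOrder (p i) (m i) F := by
  simp [linSys, vanishesToOrder_iff, Submodule.mem_iInf, aeval_eq_eval]

theorem VanishesToOrder.of_top_mderiv {p : Fin 3 → ℂ} {m d : ℕ} {F : MvPolynomial (Fin 3) ℂ}
    (hF : F.IsHomogeneous d) (hm : m ≤ d + 1)
    (h : ∀ ν : Fin 3 → ℕ, ν 0 + ν 1 + ν 2 + 1 = m → eval p (mderiv ν F) = 0) :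
    VanishesToOrder p m F := by
  induction m generalizing F d with
  | zero => trivial
  | succ m ih =>
    rcases Nat.eq_zero_or_pos m with rfl | hm0
    · exact one_iff.2 (h 0 rfl)
    · refine succ_of_isHomogeneous hF (by lia) hm0.ne' fun i =>
        ih (d := d - 1) hF.pderiv (by lia) fun ν hν => ?_
      rw [mderiv_pderiv]
      exact h _ (by rw [sum_add_single, hν])

/-! ### Order of vanishing along a substitution -/

section Substitution

variable {σ K A : Type*} [CommSemiring K] [CommRing A] [Algebra K A] {F : MvPolynomial σ K}

theorem aeval_smul_of_isHomogeneous {d : ℕ} (hF : F.IsHomogeneous d) (c : A) (g : σ → A) :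
    aeval (c • g) F = c ^ d * aeval g F := by
  simp only [aeval_def, eval₂_eq, Finset.mul_sum]
  refine Finset.sum_congr rfl fun s hs => ?_
  have hd : ∑ i ∈ s.support, s i = d := (hF.degree_eq_sum_deg_support hs).symm
  simp only [Pi.smul_apply, smul_eq_mul, mul_pow, Finset.prod_mul_distrib,
    Finset.prod_pow_eq_pow_sum, hd]
  ring

theorem derivation_aeval [Fintype σ] {M : Type*} [AddCommGroup M] [Module A M] [Module K M]
    (D : Derivation K A M) (g : σ → A) (F : MvPolynomial σ K) :
    D (aeval g F) = ∑ i, aeval g (pderiv i F) • D (g i) := by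
  classical
  induction F using MvPolynomial.induction_on with
  | C c => simp
  | add F G hF hG => simp only [map_add, hF, hG, add_smul, Finset.sum_add_distrib]
  | mul_X F j hF =>
    simp [hF, pderiv_X, Pi.single_apply, apply_ite, add_smul, mul_smul, Finset.sum_add_distrib,
      Finset.smul_sum]

theorem X_pow_succ_dvd_of_derivative [IsAddTorsionFree A] {P : Polynomial A} {m : ℕ}
    (h0 : P.coeff 0 = 0) (h : Polynomial.X ^ m ∣ Polynomial.derivative P) :
    Polynomial.X ^ (m + 1) ∣ P := by
  rw [Polynomial.X_pow_dvd_iff] at h ⊢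
  rintro (_ | k) hk
  · exact h0
  · have := h k (by lia)
    rw [Polynomial.coeff_derivative, ← Nat.cast_succ, mul_comm, ← nsmul_eq_mul] at this
    exact (smul_eq_zero.1 this).resolve_left k.succ_ne_zero

theorem VanishesToOrder.X_pow_dvd_aeval [Finite σ] [IsAddTorsionFree A] {p : σ → K} {m d : ℕ}
    (hF : VanishesToOrder p m F) (hd : F.IsHomogeneous d) {c : A} {g : σ → Polynomial A}
    (hg : ∀ i, (g i).coeff 0 = c * algebraMap K A (p i)) : Polynomial.X ^ m ∣ aeval g F := by
  cases nonempty_fintype σ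
  induction m generalizing F d with
  | zero => simp
  | succ m ih =>
    refine X_pow_succ_dvd_of_derivative ?_ ?_
    · have hg0 : (fun i => (g i).coeff 0) = c • (algebraMap K A ∘ p) := funext hg
      calc (aeval g F).coeff 0
          = ((Polynomial.aeval (R := A) (0 : A)).restrictScalars K) (aeval g F) := by
            rw [Polynomial.coeff_zero_eq_aeval_zero, AlgHom.restrictScalars_apply]
        _ = aeval (fun i => (g i).coeff 0) F := by
            rw [← AlgHom.comp_apply, comp_aeval]
            simp only [AlgHom.restrictScalars_apply, ← Polynomial.coeff_zero_eq_aeval_zero]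
        _ = 0 := by
            rw [hg0, aeval_smul_of_isHomogeneous hd, aeval_algebraMap_apply, aeval_eq_eval]
            simp [hF.1]
    · have h := derivation_aeval ((Polynomial.derivative' (R := A)).restrictScalars K) g F
      simp only [Derivation.restrictScalars_apply, Polynomial.derivative'_apply] at h
      rw [h]
      exact Finset.dvd_sum fun i _ => (ih (hF.2 i) hd.pderiv).mul_right _

theorem VanishesToOrder.pow_dvd_aeval [Finite σ] [IsAddTorsionFree A] {p : σ → K} {m d : ℕ}
    (hF : VanishesToOrder p m F) (hd : F.IsHomogeneous d) {c T : A} {g : σ → A}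
    (hg : ∀ i, T ∣ g i - c * algebraMap K A (p i)) : T ^ m ∣ aeval g F := by
  choose q hq using hg
  obtain rfl : g = fun i => c * algebraMap K A (p i) + q i * T :=
    funext fun i => by linear_combination hq i
  have h : Polynomial.X ^ m ∣ aeval (fun i => Polynomial.C (c * algebraMap K A (p i)) +
      Polynomial.C (q i) * Polynomial.X) F := hF.X_pow_dvd_aeval hd (c := c) fun i => by simp
  have h' := map_dvd ((Polynomial.aeval (R := A) T).restrictScalars K) h
  rw [map_pow, ← AlgHom.comp_apply, comp_aeval] at h'
  simpa using h'

end Substitution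

/-! ### Semicontinuity of the dimension -/

theorem finrank_homogeneousSubmodule (σ K : Type*) [Fintype σ] [CommRing K] [Nontrivial K]
    (d : ℕ) :
    Module.finrank K (homogeneousSubmodule σ K d) = (Fintype.card σ + d - 1).choose d := by
  classical
  have e : {s : σ →₀ ℕ | s.degree = d} ≃ (Finset.univ : Finset σ).finsuppAntidiag d :=
    Equiv.subtypeEquivRight fun s => by
      simp [Finset.mem_finsuppAntidiag, Finsupp.degree_eq_sum]
  have : Fintype {s : σ →₀ ℕ | s.degree = d} := Fintype.ofEquiv _ e.symm
  rw [homogeneousSubmodule_eq_finsupp_supported,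
    (AddMonoidAlgebra.supportedEquivFinsupp (R := K) (S := K) _).finrank_eq,
    Module.finrank_finsupp_self, Fintype.card_congr e, Fintype.card_coe,
    Finset.card_finsuppAntidiag_nat_eq_choose, Finset.card_univ]

instance (d : ℕ) : FiniteDimensional ℂ (homogeneousSubmodule (Fin 3) ℂ d) :=
  Module.Finite.iff_fg.2 (homogeneousSubmodule_fg (Fin 3) ℂ d)

instance {k : ℕ} (p : Fin k → Fin 3 → ℂ) (d : ℕ) (m : Fin k → ℕ) :
    FiniteDimensional ℂ (linSys p d m) :=
  Submodule.finiteDimensional_of_le (S₂ := homogeneousSubmodule (Fin 3) ℂ d) inf_le_left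

/-- The multi-indices of order `m - 1` in three variables; there are none if `m = 0`. -/
def topIndices : ℕ → Finset (Fin 3 →₀ ℕ)
  | 0 => ∅
  | m + 1 => Finset.univ.finsuppAntidiag m

theorem mem_topIndices {m : ℕ} {ν : Fin 3 →₀ ℕ} :
    ν ∈ topIndices m ↔ ν 0 + ν 1 + ν 2 + 1 = m := by
  cases m <;> simp [topIndices, Finset.mem_finsuppAntidiag, Fin.sum_univ_three]

theorem card_topIndices (m : ℕ) : (topIndices m).card = (m + 1).choose 2 := by
  cases m with
  | zero => rfl
  | succ m =>
    rw [topIndices, Finset.card_finsuppAntidiag_nat_eq_choose, Finset.card_univ, Fintype.card_fin,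
      show 3 + m - 1 = m + 2 by lia, Nat.choose_symm_add]

/-- The linear conditions cutting out `linSys p d m` in the space of forms of degree `d`. By Euler's
formula the derivatives of order `m i - 1` at `p i` are enough. -/
noncomputable def conditions {k : ℕ} (p : Fin k → Fin 3 → ℂ) (d : ℕ) (m : Fin k → ℕ) :
    homogeneousSubmodule (Fin 3) ℂ d →ₗ[ℂ] ((Σ i, topIndices (m i)) → ℂ) :=
  LinearMap.pi fun x => (aeval (p x.1)).toLinearMap ∘ₗ mderiv x.2.1 ∘ₗ Submodule.subtype _

section Conditions

variable {k : ℕ} (p : Fin k → Fin 3 → ℂ) {d : ℕ} {m : Fin k → ℕ}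

theorem conditions_apply (F : homogeneousSubmodule (Fin 3) ℂ d) (x : Σ i, topIndices (m i)) :
    conditions p d m F x = eval (p x.1) (mderiv x.2.1 F.1) := by
  simp [conditions, aeval_eq_eval]

theorem map_ker_conditions (hm : ∀ i, m i ≤ d + 1) :
    (LinearMap.ker (conditions p d m)).map (Submodule.subtype _) = linSys p d m := by
  ext F
  constructor
  · rintro ⟨F, hF, rfl⟩
    refine mem_linSys.2 ⟨F.2, fun i => .of_top_mderiv F.2 (hm i) fun ν hν => ?_⟩
    have h := congrFun hF ⟨i, Finsupp.equivFunOnFinite.symm ν, mem_topIndices.2 hν⟩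
    rwa [conditions_apply] at h
  · rw [mem_linSys]
    rintro ⟨hd, hF⟩
    refine ⟨⟨F, hd⟩, funext fun x => ?_, rfl⟩
    rw [conditions_apply]
    exact vanishesToOrder_iff.1 (hF x.1) _ (mem_topIndices.1 x.2.2).le

theorem finrank_ker_conditions (hm : ∀ i, m i ≤ d + 1) :
    Module.finrank ℂ (LinearMap.ker (conditions p d m)) = Module.finrank ℂ (linSys p d m) := by
  rw [← map_ker_conditions p hm, Submodule.finrank_map_subtype_eq]

theorem choose_two_le_finrank_linSys_add (hm : ∀ i, m i ≤ d + 1) :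
    (d + 2).choose 2 ≤ Module.finrank ℂ (linSys p d m) + ∑ i, (m i + 1).choose 2 := by
  have h1 := LinearMap.finrank_range_add_finrank_ker (conditions p d m)
  have h2 := Submodule.finrank_le (LinearMap.range (conditions p d m))
  rw [finrank_homogeneousSubmodule, finrank_ker_conditions p hm, Fintype.card_fin,
    show 3 + d - 1 = d + 2 by lia, Nat.choose_symm_add] at h1
  simp only [Module.finrank_fintype_fun_eq_card, Fintype.card_sigma, Fintype.card_coe,
    card_topIndices] at h2
  lia

end Conditions

section Semicontinuity

variable {r c τ K : Type*} [Field K] [Finite r] [Fintype c]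

theorem exists_linearIndependent_rows {A : Matrix r c K} {k : ℕ} (hk : A.rank = k) :
    ∃ f : Fin k → r, LinearIndependent K (A.submatrix f id).row := by
  have h := Submodule.exists_fun_fin_finrank_span_eq K (Set.range A.row)
  rw [← A.rank_eq_finrank_span_row, hk] at h
  obtain ⟨g, hg, -, hli⟩ := h
  choose f hf using hg
  exact ⟨f, by rwa [show (A.submatrix f id).row = g from funext hf]⟩

theorem exists_submatrix_det_ne_zero (A : Matrix r c K) :
    ∃ (f : Fin A.rank → r) (g : Fin A.rank → c), (A.submatrix f g).det ≠ 0 := by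
  obtain ⟨f, hf⟩ := exists_linearIndependent_rows (A := A) rfl
  have hrank : (A.submatrix f id).transpose.rank = A.rank := by
    rw [Matrix.rank_transpose, hf.rank_matrix, Fintype.card_fin]
  obtain ⟨g, hg⟩ := exists_linearIndependent_rows hrank
  refine ⟨f, g, ?_⟩
  rw [← Matrix.det_transpose]
  exact ((Matrix.isUnit_iff_isUnit_det _).1 (Matrix.linearIndependent_rows_iff_isUnit.1 hg)).ne_zero

theorem exists_eval_ne_zero_rank_le (A : Matrix r c (MvPolynomial τ K)) (x₀ : τ → K) :
    ∃ P : MvPolynomial τ K, eval x₀ P ≠ 0 ∧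
      ∀ x, eval x P ≠ 0 → (A.map (eval x₀)).rank ≤ (A.map (eval x)).rank := by
  obtain ⟨f, g, hdet⟩ := exists_submatrix_det_ne_zero (A.map (eval x₀))
  have heval (x : τ → K) :
      eval x (A.submatrix f g).det = ((A.map (eval x)).submatrix f g).det := by
    rw [RingHom.map_det, RingHom.mapMatrix_apply, Matrix.submatrix_map]
  refine ⟨(A.submatrix f g).det, by rwa [heval], fun x hx => ?_⟩
  rw [heval] at hx
  calc (A.map (eval x₀)).rank = ((A.map (eval x)).submatrix f g).rank := by
        rw [Matrix.rank_of_det_ne_zero hx, Fintype.card_fin]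
    _ ≤ (A.map (eval x)).rank := Matrix.rank_submatrix_le _ _ _

end Semicontinuity

theorem generically_finrank_linSys_le {k : ℕ} (p₀ : Fin k → Fin 3 → ℂ) {d : ℕ} {m : Fin k → ℕ}
    (hm : ∀ i, m i ≤ d + 1) :
    Generically k fun p =>
      Module.finrank ℂ (linSys p d m) ≤ Module.finrank ℂ (linSys p₀ d m) := by
  classical
  let b := Module.finBasis ℂ (homogeneousSubmodule (Fin 3) ℂ d)
  let A : Matrix (Σ i, topIndices (m i)) _ (MvPolynomial (Fin k × Fin 3) ℂ) :=
    Matrix.of fun x j => rename (Prod.mk x.1) (mderiv x.2.1 (b j).1)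
  have hA (p : Fin k → Fin 3 → ℂ) :
      A.map (eval fun x => p x.1 x.2) =
        LinearMap.toMatrix b (Pi.basisFun ℂ _) (conditions p d m) := by
    ext x j
    simp [A, LinearMap.toMatrix_apply, conditions_apply, eval_rename, Function.comp_def]
  have hrank (p : Fin k → Fin 3 → ℂ) : (A.map (eval fun x => p x.1 x.2)).rank +
      Module.finrank ℂ (linSys p d m) = Module.finrank ℂ (homogeneousSubmodule (Fin 3) ℂ d) := by
    rw [hA, Matrix.rank_eq_finrank_range_toLin _ (Pi.basisFun ℂ _) b, Matrix.toLin_toMatrix,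
      ← finrank_ker_conditions p hm, LinearMap.finrank_range_add_finrank_ker]
  obtain ⟨P, hP₀, hP⟩ := exists_eval_ne_zero_rank_le A fun x => p₀ x.1 x.2
  refine ⟨P, fun h => hP₀ (by rw [h, map_zero]), fun p _ hp => ?_⟩
  have := hP _ hp
  have := hrank p
  have := hrank p₀
  lia

/-! ### Splitting off lines -/

theorem exists_linearForm_eval_eq_zero (p q : Fin 3 → ℂ) :
    ∃ L : MvPolynomial (Fin 3) ℂ, L ≠ 0 ∧ L.IsHomogeneous 1 ∧ eval p L = 0 ∧ eval q L = 0 := by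
  have h := choose_two_le_finrank_linSys_add ![p, q] (d := 1) (m := ![1, 1]) (by simp)
  have hbot : linSys ![p, q] 1 ![1, 1] ≠ ⊥ := by
    simpa [Fin.sum_univ_two, Nat.choose] using h
  obtain ⟨L, hL, hL0⟩ := Submodule.exists_mem_ne_zero_of_ne_bot hbot
  obtain ⟨hd, hv⟩ := mem_linSys.1 hL
  exact ⟨L, hL0, hd, VanishesToOrder.one_iff.1 (hv 0),
    VanishesToOrder.one_iff.1 (hv 1)⟩

theorem finrank_linSys_le_of_mem {k d d' : ℕ} {p : Fin k → Fin 3 → ℂ} {m m' : Fin k → ℕ}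
    {G : MvPolynomial (Fin 3) ℂ} (hG0 : G ≠ 0) (hG : G ∈ linSys p d' m') :
    Module.finrank ℂ (linSys p d m) ≤ Module.finrank ℂ (linSys p (d' + d) (m' + m)) := by
  obtain ⟨hGd, hGv⟩ := mem_linSys.1 hG
  have hmul : ∀ F ∈ linSys p d m, G * F ∈ linSys p (d' + d) (m' + m) := fun F hF => by
    obtain ⟨hFd, hFv⟩ := mem_linSys.1 hF
    exact mem_linSys.2 ⟨hGd.mul hFd, fun i => (hGv i).mul (hFv i)⟩
  refine LinearMap.finrank_le_finrank_of_injective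
    (f := (LinearMap.mulLeft ℂ G).restrict hmul) fun F F' h => ?_
  exact Subtype.ext (mul_left_cancel₀ hG0 (congrArg Subtype.val h))

theorem exists_prod_lines_mem_linSys {n : ℕ} (p : Fin (n + 1) → Fin 3 → ℂ) (s : ℕ) :
    ∃ G : MvPolynomial (Fin 3) ℂ, G ≠ 0 ∧ G ∈ linSys p (n * s) (Fin.cons (n * s) fun _ => s) := by
  choose L hL0 hLd hLp hLq using fun i : Fin n => exists_linearForm_eval_eq_zero (p 0) (p i.succ)
  have hpow {q : Fin 3 → ℂ} {i} (h : eval q (L i) = 0) : VanishesToOrder q s (L i ^ s) := by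
    simpa using (VanishesToOrder.one_iff.2 h).pow s
  refine ⟨∏ i, L i ^ s, Finset.prod_ne_zero_iff.2 fun i _ => pow_ne_zero _ (hL0 i),
    mem_linSys.2 ⟨?_, Fin.cases ?_ fun j => ?_⟩⟩
  · simpa using IsHomogeneous.prod Finset.univ _ (fun _ => 1 * s) fun i _ => (hLd i).pow s
  · simpa using VanishesToOrder.prod fun i => hpow (hLp i)
  · classical
    have h : ∀ i, VanishesToOrder (p j.succ) (if i = j then s else 0) (L i ^ s) := fun i => by
      split_ifs with hij
      · exact hij ▸ hpow (hLq i)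
      · trivial
    simpa using VanishesToOrder.prod h

theorem choose_two_le_finrank_linSys_cons_add {n : ℕ} (p : Fin (n + 1) → Fin 3 → ℂ) (e b s : ℕ) :
    (e + b + 2).choose 2 ≤
      Module.finrank ℂ (linSys p (n * s + (e + b)) (Fin.cons (n * s + e) fun _ => s + b)) +
        ((e + 1).choose 2 + n * (b + 1).choose 2) := by
  obtain ⟨G, hG0, hG⟩ := exists_prod_lines_mem_linSys p s
  have hm_le (i : Fin (n + 1)) : (Fin.cons e fun _ => b : Fin (n + 1) → ℕ) i ≤ e + b + 1 := by
    cases i using Fin.cases <;> simp only [Fin.cons_zero, Fin.cons_succ] <;> lia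
  have hcount := choose_two_le_finrank_linSys_add p hm_le
  have hmul := finrank_linSys_le_of_mem (d := e + b) (m := Fin.cons e fun _ => b) hG0 hG
  have hm : (Fin.cons (n * s) (fun _ => s) + Fin.cons e fun _ => b : Fin (n + 1) → ℕ) =
      Fin.cons (n * s + e) fun _ => s + b := by
    ext i
    cases i using Fin.cases <;> rfl
  rw [hm] at hmul
  simp only [Fin.sum_univ_succ, Fin.cons_zero, Fin.cons_succ, Finset.sum_const, Finset.card_univ,
    Fintype.card_fin, smul_eq_mul] at hcount
  lia

/-! ### The ruled surface -/

/-- The parametrization `(t, s) ↦ (t (s + t ^ r) : s + t ^ r : 1 + t ^ m s)` of the plane by a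
rational ruled surface, which maps the rulings `t = const` to the lines through `(0 : 0 : 1)`. -/
def scrollMap {A : Type*} [CommSemiring A] (m r : ℕ) (t s : A) : Fin 3 → A :=
  ![t * (s + t ^ r), s + t ^ r, 1 + t ^ m * s]

section ScrollMap

open scoped Polynomial.Bivariate

variable {K A : Type*} [CommRing K] [CommRing A] [Algebra K A] {F : MvPolynomial (Fin 3) K}
  {m r d k : ℕ}

theorem map_aeval_scrollMap {B : Type*} [CommRing B] [Algebra K B] (f : A →ₐ[K] B) (t s : A) :
    f (aeval (scrollMap m r t s) F) = aeval (scrollMap m r (f t) (f s)) F := by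
  rw [← AlgHom.comp_apply, comp_aeval]
  congr 2
  ext i
  fin_cases i <;> simp [scrollMap]

/-- The pullback of a form along `scrollMap`, as a polynomial in `t = Polynomial.C Polynomial.X` and
`s = Y`. -/
noncomputable def scrollPullback (m r : ℕ) : MvPolynomial (Fin 3) K →ₐ[K] K[X][Y] :=
  aeval (scrollMap m r (Polynomial.C Polynomial.X) Y)

theorem map_scrollPullback (f : K[X][Y] →ₐ[K] A) : f (scrollPullback m r F) =
    aeval (scrollMap m r (f (Polynomial.C Polynomial.X)) (f Y)) F :=
  map_aeval_scrollMap f _ _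

theorem pow_dvd_aeval_scrollMap_of_vertex [IsAddTorsionFree A] (hd : F.IsHomogeneous d)
    (hF : VanishesToOrder ![0, 0, 1] k F) (t s : A) :
    (s + t ^ r) ^ k ∣ aeval (scrollMap m r t s) F :=
  hF.pow_dvd_aeval hd (c := scrollMap m r t s 2) fun i => by
    fin_cases i <;> simp [scrollMap]

theorem pow_dvd_aeval_scrollMap_of_root [IsAddTorsionFree A] (hd : F.IsHomogeneous d) {a : K}
    (ha : a ^ (m + r) = 1) (hF : VanishesToOrder ![a, 1, a ^ m] k F) (t s : A) :
    (t - algebraMap K A a) ^ k ∣ aeval (scrollMap m r t s) F := by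
  have hpow (e : ℕ) : t - algebraMap K A a ∣ t ^ e - algebraMap K A a ^ e :=
    sub_dvd_pow_sub_pow _ _ e
  have ha' : algebraMap K A a ^ m * algebraMap K A a ^ r = 1 := by
    rw [← map_pow, ← map_pow, ← map_mul, ← pow_add, ha, map_one]
  refine hF.pow_dvd_aeval hd (c := s + algebraMap K A a ^ r) (Fin.forall_fin_succ.2 ⟨?_, ?_⟩)
  · convert dvd_add (dvd_mul_right _ s) (hpow (r + 1)) using 1
    simp only [scrollMap, Matrix.cons_val_zero]
    ring
  refine Fin.forall_fin_two.2 ⟨?_, ?_⟩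
  · simpa [scrollMap] using hpow r
  · convert (hpow m).mul_right s using 1
    simp only [scrollMap, Fin.succ_one_eq_two, Matrix.cons_val, map_pow]
    linear_combination -ha'

theorem exists_eq_smul_scrollMap {L : Type*} [Field L] {v : Fin 3 → L} (h1 : v 1 ≠ 0)
    (h01 : v 0 ^ (m + r) ≠ v 1 ^ (m + r)) (h012 : v 0 ^ m * v 1 ≠ v 2 * v 1 ^ m) :
    ∃ c t s : L, v = c • scrollMap m r t s := by
  obtain ⟨t, ht⟩ : ∃ t, v 0 = t * v 1 := ⟨v 0 / v 1, (div_mul_cancel₀ _ h1).symm⟩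
  obtain ⟨z, hz⟩ : ∃ z, v 2 = z * v 1 := ⟨v 2 / v 1, (div_mul_cancel₀ _ h1).symm⟩
  have ht' : t ^ (m + r) - 1 ≠ 0 := fun h => h01 (by rw [ht, mul_pow, sub_eq_zero.1 h, one_mul])
  have hz' : t ^ m - z ≠ 0 := fun h => h012 (by rw [ht, hz, ← sub_eq_zero.1 h]; ring)
  -- `s` solves `1 + t ^ m * s = z * (s + t ^ r)`.
  obtain ⟨s, hs⟩ : ∃ s, s * (t ^ m - z) = z * t ^ r - 1 :=
    ⟨(z * t ^ r - 1) / (t ^ m - z), div_mul_cancel₀ _ hz'⟩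
  have hst : s + t ^ r ≠ 0 := fun h => ht' (by linear_combination (t ^ m - z) * h - hs)
  refine ⟨v 1 / (s + t ^ r), t, s, funext (Fin.forall_fin_succ.2 ⟨?_, ?_⟩)⟩
  · simp only [scrollMap, Pi.smul_apply, Matrix.cons_val_zero, smul_eq_mul, ht]
    field_simp
  refine Fin.forall_fin_two.2 ⟨?_, ?_⟩
  · simp [scrollMap, hst]
  · simp only [scrollMap, Fin.succ_one_eq_two, Pi.smul_apply, Matrix.cons_val, smul_eq_mul, hz]
    field_simp
    linear_combination -hs

theorem exists_algHom_X_eq_smul_scrollMap [Nontrivial K] {L : Type*} [Field L] [Algebra K L]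
    {ι : MvPolynomial (Fin 3) K →ₐ[K] L} (hι : Function.Injective ι) (hmr : m + r ≠ 0) :
    ∃ c t s : L, (fun i => ι (X i)) = c • scrollMap m r t s := by
  have hne {G H : MvPolynomial (Fin 3) K} (v : Fin 3 → K) (hv : eval v G ≠ eval v H) :
      ι G ≠ ι H := fun e => hv (congrArg (eval v) (hι e))
  refine exists_eq_smul_scrollMap ?_ ?_ ?_
  · rw [← map_zero ι]
    exact hne ![0, 1, 0] (by simp)
  · rw [← map_pow, ← map_pow]
    exact hne ![0, 1, 0] (by simp [zero_pow hmr])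
  · rw [← map_pow, ← map_pow, ← map_mul, ← map_mul]
    exact hne ![1, 1, 0] (by simp)

theorem eq_zero_of_scrollPullback_eq_zero [IsDomain K] (hmr : m + r ≠ 0)
    (hd : F.IsHomogeneous d) (h : scrollPullback m r F = 0) : F = 0 := by
  let ι := Algebra.algHom K (MvPolynomial (Fin 3) K) (FractionRing (MvPolynomial (Fin 3) K))
  have hι : Function.Injective ι := IsFractionRing.injective _ _
  obtain ⟨c, t, s, hv⟩ := exists_algHom_X_eq_smul_scrollMap hι hmr
  refine hι ?_
  calc ι F = aeval (fun i => ι (X i)) F := congrArg (· F) (aeval_unique ι)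
    _ = c ^ d * Polynomial.aevalAeval t s (scrollPullback m r F) := by
      rw [hv, aeval_smul_of_isHomogeneous hd, map_scrollPullback]
      simp
    _ = ι 0 := by rw [h, map_zero, map_zero, mul_zero]

end ScrollMap

section Bivariate

open scoped Polynomial.Bivariate

theorem C_dvd_of_C_dvd_monic_mul {R : Type*} [CommRing R] {δ : R} {P q : Polynomial R}
    (hP : P.Monic) (h : Polynomial.C δ ∣ P * q) : Polynomial.C δ ∣ q := by
  have hmap (G : Polynomial R) :
      Polynomial.C δ ∣ G ↔ G.map (Ideal.Quotient.mk (Ideal.span {δ})) = 0 := by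
    simp [Polynomial.C_dvd_iff_dvd_coeff, Polynomial.ext_iff, Ideal.Quotient.eq_zero_iff_dvd]
  rw [hmap, Polynomial.map_mul, (hP.map _).mul_right_eq_zero_iff] at h
  exact (hmap q).2 h

theorem natDegree_aeval_le {σ K R : Type*} [CommSemiring K] [CommSemiring R] [Algebra K R]
    {F : MvPolynomial σ K} {d e : ℕ} (hd : F.IsHomogeneous d) {g : σ → Polynomial R}
    (hg : ∀ i, (g i).natDegree ≤ e) : (aeval g F).natDegree ≤ d * e := by
  rw [← aeval_map_algebraMap R]
  exact aeval_natDegree_le _ (hd.map _).totalDegree_le g hg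

/-! ### Newton polygons -/

/-- The substitution `t ↦ s`, `s ↦ s ^ ε t`. The `s`-degree after the substitution is the degree
for which `t ^ i s ^ k` has weight `i + ε k`. -/
noncomputable def twist {K : Type*} [CommSemiring K] (ε : ℕ) : K[X][Y] →ₐ[K] K[X][Y] :=
  Polynomial.aevalAeval Y (Y ^ ε * Polynomial.C Polynomial.X)

section Twist

variable {K : Type*} [CommSemiring K]

theorem twist_C_X (ε : ℕ) : twist ε (Polynomial.C Polynomial.X : K[X][Y]) = Y := by
  simp [twist]

theorem twist_Y (ε : ℕ) : twist ε (Y : K[X][Y]) = Y ^ ε * Polynomial.C Polynomial.X := by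
  simp [twist]

theorem twist_C_C (ε : ℕ) (a : K) :
    twist ε (Polynomial.C (Polynomial.C a)) = Polynomial.C (Polynomial.C a) :=
  (twist ε).commutes a

theorem coeff_coeff_twist (ε i k : ℕ) (c : K[X][Y]) :
    ((twist ε c).coeff (i + ε * k)).coeff k = (c.coeff k).coeff i := by
  induction c using Polynomial.induction_on' with
  | add p q hp hq => simp [hp, hq]
  | monomial n a =>
    induction a using Polynomial.induction_on' with
    | add p q hp hq => simp [hp, hq]
    | monomial j a =>
      have h : twist ε (Polynomial.monomial n (Polynomial.monomial j a)) =
          Polynomial.monomial (j + ε * n) (Polynomial.monomial n a) := by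
        simp only [← Polynomial.C_mul_X_pow_eq_monomial, map_mul, map_pow, twist_C_C,
          twist_C_X, twist_Y]
        ring
      rw [h]
      have hite (q : Polynomial K) (P : Prop) [Decidable P] :
          (if P then q else 0).coeff k = if P then q.coeff k else 0 := by
        rw [apply_ite (Polynomial.coeff · k), Polynomial.coeff_zero]
      rcases eq_or_ne n k with rfl | hn
      · simp [Polynomial.coeff_monomial, hite]
      · simp [Polynomial.coeff_monomial, hite, hn]

theorem twist_injective (ε : ℕ) : Function.Injective (twist (K := K) ε) := fun c c' h => by
  ext k i
  rw [← coeff_coeff_twist ε, h, coeff_coeff_twist]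

theorem le_natDegree_twist {ε i k : ℕ} {c : K[X][Y]} (h : (c.coeff k).coeff i ≠ 0) :
    i + ε * k ≤ (twist ε c).natDegree := by
  refine Polynomial.le_natDegree_of_ne_zero fun h0 => h ?_
  rw [← coeff_coeff_twist ε, h0, Polynomial.coeff_zero]

end Twist

variable {K : Type*} [Field K] {F : MvPolynomial (Fin 3) K} {m r d e ε k i : ℕ}

theorem dvd_scrollPullback [CharZero K] (hd : F.IsHomogeneous d) {n l : ℕ} {a : Fin n → K}
    (ha : Function.Injective a) (har : ∀ i, a i ^ (m + r) = 1)
    (h0 : VanishesToOrder ![0, 0, 1] k F) (h : ∀ i, VanishesToOrder ![a i, 1, a i ^ m] l F) :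
    (Y + Polynomial.C (Polynomial.X ^ r)) ^ k *
        Polynomial.C (∏ i, (Polynomial.X - Polynomial.C (a i)) ^ l) ∣
      scrollPullback m r F := by
  obtain ⟨q, hq⟩ := pow_dvd_aeval_scrollMap_of_vertex (m := m) (r := r) hd h0
    (Polynomial.C Polynomial.X : K[X][Y]) Y
  rw [scrollPullback, hq, Polynomial.C_pow]
  refine mul_dvd_mul_left _ ((Polynomial.C_dvd_iff_dvd_coeff _ _).2 fun j =>
    Finset.prod_dvd_of_coprime
      (fun i _ i' _ hne => (Polynomial.pairwise_coprime_X_sub_C ha hne).pow) fun i _ => ?_)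
  refine (Polynomial.C_dvd_iff_dvd_coeff _ _).1 ?_ j
  refine C_dvd_of_C_dvd_monic_mul ((Polynomial.monic_X_add_C (Polynomial.X ^ r)).pow k) ?_
  have hi := pow_dvd_aeval_scrollMap_of_root hd (har i) (h i)
    (Polynomial.C Polynomial.X : K[X][Y]) Y
  rw [hq] at hi
  simpa using hi

theorem natDegree_scrollPullback_le (hd : F.IsHomogeneous d) :
    (scrollPullback m r F).natDegree ≤ d := by
  refine (natDegree_aeval_le hd (e := 1) fun i => ?_).trans_eq (mul_one d)
  have hD : (Y + Polynomial.C Polynomial.X ^ r : K[X][Y]).natDegree ≤ 1 := by compute_degree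
  fin_cases i
  · exact (Polynomial.natDegree_C_mul_le _ _).trans hD
  · exact hD
  · change (1 + Polynomial.C Polynomial.X ^ m * Y : K[X][Y]).natDegree ≤ 1
    compute_degree

theorem natDegree_twist_scrollPullback_le (hmr : m + ε = r + 1) (hε : ε ≤ r)
    (hd : F.IsHomogeneous d) : (twist ε (scrollPullback m r F)).natDegree ≤ d * (r + 1) := by
  rw [map_scrollPullback, twist_C_X, twist_Y]
  refine natDegree_aeval_le hd fun i => ?_
  have hD : (Y ^ ε * Polynomial.C Polynomial.X + Y ^ r : K[X][Y]).natDegree ≤ r := by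
    compute_degree
    simpa using hε
  fin_cases i
  · exact (Polynomial.natDegree_mul_le_of_le Polynomial.natDegree_X_le hD).trans_eq (add_comm 1 r)
  · exact hD.trans r.le_succ
  · change (1 + Y ^ m * (Y ^ ε * Polynomial.C Polynomial.X) : K[X][Y]).natDegree ≤ r + 1
    rw [← mul_assoc, ← pow_add, hmr]
    compute_degree

section Exponents

variable {δ : Polynomial K} {c : K[X][Y]}

theorem add_le_of_scrollPullback_eq (hd : F.IsHomogeneous d) (hδ : δ ≠ 0)
    (h : scrollPullback m r F = (Y + Polynomial.C (Polynomial.X ^ r)) ^ e * Polynomial.C δ * c)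
    (hc : c.coeff k ≠ 0) : e + k ≤ d := by
  have hD : (Y + Polynomial.C (Polynomial.X ^ r) : K[X][Y]).Monic := Polynomial.monic_X_add_C _
  have hδc : Polynomial.C δ * c ≠ 0 := by
    refine mul_ne_zero (Polynomial.C_ne_zero.2 hδ) ?_
    rintro rfl
    exact hc (Polynomial.coeff_zero k)
  calc e + k ≤ e + c.natDegree := by
        gcongr
        exact Polynomial.le_natDegree_of_ne_zero hc
    _ = (scrollPullback m r F).natDegree := by
        rw [h, mul_assoc, (hD.pow e).natDegree_mul' hδc, Polynomial.natDegree_C_mul hδ,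
          hD.natDegree_pow, Polynomial.natDegree_X_add_C, mul_one]
    _ ≤ d := natDegree_scrollPullback_le hd

theorem weight_le_of_scrollPullback_eq (hmr : m + ε = r + 1) (hε : ε ≤ r)
    (hd : F.IsHomogeneous d) (hδ : δ ≠ 0)
    (h : scrollPullback m r F = (Y + Polynomial.C (Polynomial.X ^ r)) ^ e * Polynomial.C δ * c)
    (hc : (c.coeff k).coeff i ≠ 0) :
    e * r + δ.natDegree + (i + ε * k) ≤ d * (r + 1) := by
  have hne {G : K[X][Y]} (hG : G ≠ 0) : twist ε G ≠ 0 :=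
    (map_ne_zero_iff _ (twist_injective ε)).2 hG
  have hD0 := hne (Polynomial.monic_X_add_C (Polynomial.X ^ r : Polynomial K)).ne_zero
  have hδ0 := hne (Polynomial.C_ne_zero.2 hδ)
  have hc0 : twist ε c ≠ 0 := hne <| by
    rintro rfl
    exact hc (by rw [Polynomial.coeff_zero, Polynomial.coeff_zero])
  have hD_deg : r ≤ (twist ε (Y + Polynomial.C (Polynomial.X ^ r) : K[X][Y])).natDegree :=
    le_natDegree_twist (k := 0) (i := r) (by simp [-map_pow])
  have hδ_deg : δ.natDegree ≤ (twist ε (Polynomial.C δ)).natDegree :=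
    le_natDegree_twist (k := 0) (i := δ.natDegree) (by simpa using hδ)
  calc e * r + δ.natDegree + (i + ε * k)
      ≤ e * (twist ε (Y + Polynomial.C (Polynomial.X ^ r) : K[X][Y])).natDegree +
          (twist ε (Polynomial.C δ)).natDegree + (twist ε c).natDegree := by
        gcongr
        exact le_natDegree_twist hc
    _ = (twist ε (scrollPullback m r F)).natDegree := by
        rw [h, map_mul, map_mul, map_pow (twist ε),
          Polynomial.natDegree_mul (mul_ne_zero (pow_ne_zero e hD0) hδ0) hc0,
          Polynomial.natDegree_mul (pow_ne_zero e hD0) hδ0, Polynomial.natDegree_pow]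
    _ ≤ d * (r + 1) := natDegree_twist_scrollPullback_le hmr hε hd

end Exponents

theorem finrank_le_card_of_coeff_ne_zero {S : Submodule K K[X][Y]} {s : Finset (Σ _ : ℕ, ℕ)}
    (h : ∀ c ∈ S, ∀ k i, (c.coeff k).coeff i ≠ 0 → ⟨k, i⟩ ∈ s) :
    Module.finrank K S ≤ s.card := by
  let coeffs : S →ₗ[K] s → K := LinearMap.pi fun x =>
    (Polynomial.lcoeff K x.1.2).comp
      (((Polynomial.lcoeff (Polynomial K) x.1.1).restrictScalars K).comp S.subtype)
  have hinj : Function.Injective coeffs := by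
    rw [injective_iff_map_eq_zero]
    rintro ⟨c, hc⟩ h0
    ext k i
    by_contra hki
    exact hki (congrFun h0 ⟨_, h c hc k i hki⟩)
  simpa using coeffs.finrank_le_finrank_of_injective hinj

theorem finrank_le_card_of_eq_mul {W : Type*} [AddCommGroup W] [Module K W]
    {Φ : W →ₗ[K] K[X][Y]} (hΦ : Function.Injective Φ) {P : K[X][Y]} (hP : P ≠ 0)
    {s : Finset (Σ _ : ℕ, ℕ)}
    (h : ∀ w, ∃ c, Φ w = P * c ∧ ∀ k i, (c.coeff k).coeff i ≠ 0 → ⟨k, i⟩ ∈ s) :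
    Module.finrank K W ≤ s.card := by
  let μ := LinearMap.mulLeft K P
  have hμ : Function.Injective μ := mul_right_injective₀ hP
  have hle : LinearMap.range Φ ≤ LinearMap.range μ := by
    rintro _ ⟨w, rfl⟩
    obtain ⟨c, hc, -⟩ := h w
    exact ⟨c, hc.symm⟩
  let S := (LinearMap.range Φ).comap μ
  calc Module.finrank K W = Module.finrank K (S.map μ) := by
        rw [Submodule.map_comap_eq_of_le hle, LinearMap.finrank_range_of_inj hΦ]
    _ = Module.finrank K S := (Submodule.equivMapOfInjective μ hμ S).finrank_eq.symm
    _ ≤ s.card := by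
        refine finrank_le_card_of_coeff_ne_zero ?_
        rintro c ⟨w, hw⟩
        obtain ⟨c', hc', hs⟩ := h w
        rwa [← hμ (hc'.symm.trans hw)]

theorem finrank_linSys_scroll_le {n d m r b l ε : ℕ} (hb : b ≤ d) (hmr : m + ε = r + 1) (hε : ε ≤ r)
    {a : Fin n → ℂ} (ha : Function.Injective a) (har : ∀ i, a i ^ (m + r) = 1) :
    Module.finrank ℂ (linSys (Fin.cons ![0, 0, 1] fun i => ![a i, 1, a i ^ m]) d
        (Fin.cons (d - b) fun _ => l)) ≤
      ∑ k ∈ Finset.range (b + 1), (d + b * r + 1 - l * n - ε * k) := by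
  let δ : Polynomial ℂ := ∏ i, (Polynomial.X - Polynomial.C (a i)) ^ l
  have hδ : δ.Monic := Polynomial.monic_prod_of_monic _ _ fun i _ =>
    (Polynomial.monic_X_sub_C (a i)).pow l
  have hδ_deg : δ.natDegree = l * n := by
    simp [δ, Polynomial.natDegree_prod_of_monic, Polynomial.monic_X_sub_C, Polynomial.Monic.pow,
      mul_comm]
  have hP : (Y + Polynomial.C (Polynomial.X ^ r)) ^ (d - b) * Polynomial.C δ ≠ 0 :=
    mul_ne_zero ((Polynomial.monic_X_add_C _).pow _).ne_zero (Polynomial.C_ne_zero.2 hδ.ne_zero)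
  set V := linSys (Fin.cons ![0, 0, 1] fun i => ![a i, 1, a i ^ m]) d (Fin.cons (d - b) fun _ => l)
  have hV {F} (hF : F ∈ V) : F.IsHomogeneous d ∧ VanishesToOrder ![0, 0, 1] (d - b) F ∧
      ∀ i, VanishesToOrder ![a i, 1, a i ^ m] l F := by
    simpa [V, mem_linSys, Fin.forall_fin_succ] using hF
  have hΦ : Function.Injective ((scrollPullback m r).toLinearMap.domRestrict V) := by
    rw [injective_iff_map_eq_zero]
    rintro ⟨F, hF⟩ h
    exact Subtype.ext (eq_zero_of_scrollPullback_eq_zero (by lia) (hV hF).1 h)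
  calc Module.finrank ℂ V
      ≤ ((Finset.range (b + 1)).sigma fun k =>
          Finset.range (d + b * r + 1 - l * n - ε * k)).card := by
        refine finrank_le_card_of_eq_mul hΦ hP fun ⟨F, hF⟩ => ?_
        obtain ⟨hd, h0, h⟩ := hV hF
        obtain ⟨c, hc⟩ := dvd_scrollPullback hd ha har h0 h
        refine ⟨c, hc, fun k i hki => ?_⟩
        have hk := add_le_of_scrollPullback_eq hd hδ.ne_zero hc (k := k)
          fun h => hki (by rw [h, Polynomial.coeff_zero])
        have hi := weight_le_of_scrollPullback_eq hmr hε hd hδ.ne_zero hc hki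
        obtain ⟨e, rfl⟩ := Nat.exists_eq_add_of_le' hb
        rw [hδ_deg, Nat.add_sub_cancel] at hi
        have : (e + b) * (r + 1) = e * r + (e + b + b * r) := by ring
        simp only [Finset.mem_sigma, Finset.mem_range]
        constructor <;> lia
    _ = ∑ k ∈ Finset.range (b + 1), (d + b * r + 1 - l * n - ε * k) := by
        simp only [Finset.card_sigma, Finset.card_range]

end Bivariate

/-! ### The system `L(d, d - 3, 6ⁿ)` -/

theorem qh_eq_cons (n m₀ : ℕ) : qh n m₀ = Fin.cons m₀ fun _ => 6 := by
  ext i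
  cases i using Fin.cases <;> simp [qh]

theorem four_mul_le_finrank_linSys_add {n d : ℕ} (hn : 1 ≤ n) (hd : 18 * n + 3 ≤ 4 * d)
    (p : Fin (n + 1) → Fin 3 → ℂ) :
    4 * d ≤ Module.finrank ℂ (linSys p d (qh n (d - 3))) + (18 * n + 2) := by
  obtain ⟨e, rfl⟩ : ∃ e, d = n * 3 + (e + 3) := ⟨d - 3 - n * 3, by lia⟩
  have h := choose_two_le_finrank_linSys_cons_add p e 3 3
  have h1 : (e + 3 + 2).choose 2 = (e + 1).choose 2 + 4 * e + 10 := by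
    simp only [Nat.choose_succ_succ', Nat.choose_zero_right, zero_add, Nat.choose_one_right]
    lia
  have h2 : (3 + 1).choose 2 = 6 := rfl
  rw [h1, h2] at h
  rw [qh_eq_cons, show n * 3 + (e + 3) - 3 = n * 3 + e by lia]
  lia

theorem exists_finrank_linSys_add_le {n d : ℕ} (hn : 1 ≤ n) (hd : 18 * n + 3 ≤ 4 * d)
    (h : Odd n ∨ 2 * d ≠ 9 * n + 2) : ∃ p : Fin (n + 1) → Fin 3 → ℂ,
      Module.finrank ℂ (linSys p d (qh n (d - 3))) + (18 * n + 2) ≤ 4 * d := by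
  obtain ⟨ζ, hζ⟩ : ∃ ζ : ℂ, IsPrimitiveRoot ζ n := ⟨_, Complex.isPrimitiveRoot_exp n (by lia)⟩
  have ha : Function.Injective fun i : Fin n => ζ ^ (i : ℕ) := fun i j hij =>
    Fin.ext (hζ.pow_inj i.2 j.2 hij)
  have har (i : Fin n) : (ζ ^ (i : ℕ)) ^ n = 1 := by
    rw [← pow_mul, mul_comm, pow_mul, hζ.pow_eq_one, one_pow]
  rw [qh_eq_cons]
  rcases Nat.even_or_odd' n with ⟨r, rfl | rfl⟩
  · have hbound := finrank_linSys_scroll_le (m := r) (r := r) (d := d) (b := 3) (l := 6) (ε := 1)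
      (by lia) rfl (by lia) ha (by simpa only [two_mul] using har)
    have := h.resolve_left (by simp)
    refine ⟨_, (Nat.add_le_add_right hbound _).trans ?_⟩
    simp only [Finset.sum_range_succ, Finset.sum_range_zero]
    lia
  · have hbound := finrank_linSys_scroll_le (m := r + 1) (r := r) (d := d) (b := 3) (l := 6)
      (ε := 0) (by lia) rfl (by lia) ha (by simpa only [two_mul, add_right_comm r 1 r] using har)
    refine ⟨_, (Nat.add_le_add_right hbound _).trans ?_⟩
    simp only [Finset.sum_range_succ, Finset.sum_range_zero]
    lia

theorem virtDim_qh_sub_three {d n : ℕ} (hd : 3 ≤ d) :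
    virtDim d (qh n (d - 3)) = 4 * (d : ℤ) - 21 * n - 3 := by
  obtain ⟨e, rfl⟩ := Nat.exists_eq_add_of_le' hd
  have h : ((e + 3 : ℕ) : ℤ) * ((e + 3 : ℕ) + 3) = e * (e + 1) + 2 * (4 * e + 9) := by
    push_cast
    ring
  simp only [virtDim, qh_eq_cons, Fin.sum_univ_succ, Fin.cons_zero, Fin.cons_succ, h,
    Nat.add_sub_cancel, Int.add_mul_ediv_left _ _ two_ne_zero]
  simp only [Finset.sum_const, Finset.card_univ, Fintype.card_fin, nsmul_eq_mul, Nat.cast_ofNat,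
    Int.reduceAdd, Int.reduceMul, Int.reduceDiv, Nat.cast_add]
  ring

theorem special_L_d_dsub3_sixn_general {d n : ℕ} (hn : 1 ≤ n) (hd : 18 * n + 3 ≤ 4 * d) :
    virtDim d (qh n (d - 3)) = 4 * (d : ℤ) - 21 * n - 3 ∧
    (∀ p : Fin (n + 1) → Fin 3 → ℂ,
      projDim p d (qh n (d - 3)) ≥ 4 * (d : ℤ) - 18 * n - 3 ∧
      projDim p d (qh n (d - 3)) > max (-1) (virtDim d (qh n (d - 3)))) ∧
    ((Odd n ∨ 2 * d ≠ 9 * n + 2) → Generically (n + 1) fun p =>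
      projDim p d (qh n (d - 3)) = 4 * (d : ℤ) - 18 * n - 3) := by
  have hv := virtDim_qh_sub_three (n := n) (show 3 ≤ d by lia)
  have hlower := four_mul_le_finrank_linSys_add hn hd
  rw [hv]
  refine ⟨rfl, fun p => ?_, fun h => ?_⟩
  · have := hlower p
    simp only [projDim, gt_iff_lt, max_lt_iff]
    lia
  · obtain ⟨p₀, hp₀⟩ := exists_finrank_linSys_add_le hn hd h
    have hm (i) : qh n (d - 3) i ≤ d + 1 := by
      unfold qh
      split_ifs <;> lia
    refine (generically_finrank_linSys_le p₀ hm).mono fun p hp => ?_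
    have := hlower p
    simp only [projDim]
    lia

theorem special_L_d_dsub3_sixn (d n : ℕ) (hn : 1 ≤ n) (hd : 18 * n + 3 ≤ 4 * d) :
    virtDim d (qh n (d - 3)) = 4 * (d : ℤ) - 21 * n - 3 ∧
    Generically (n + 1) (fun p =>
      projDim p d (qh n (d - 3)) ≥ 4 * (d : ℤ) - 18 * n - 3 ∧
      ((Odd n ∨ 2 * d ≠ 9 * n + 2) →
        projDim p d (qh n (d - 3)) = 4 * (d : ℤ) - 18 * n - 3) ∧
      projDim p d (qh n (d - 3)) > max (-1) (virtDim d (qh n (d - 3)))) := by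
  obtain ⟨hvirt, hall, hgen⟩ := special_L_d_dsub3_sixn_general hn hd
  exact ⟨hvirt, (Generically.const_imp hgen).mono fun p hp => ⟨(hall p).1, hp, (hall p).2⟩⟩
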